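/- Let p ≥ 3 be a prime and 3 ≤ k ≤ p. There exists a resolved partial linear space with pk points and p parallel classes, whose points form a half-set of Z_{p(2k+1)} \ ⟨2k+1⟩, each parallel class is a partition of the point set into p blocks of size k each summing to zero in Z_{p(2k+1)}, every two points lie in at most one common block, and each block admits an ordering whose partial sums are pairwise distinct in Z_{p(2k+1)}. -/

import Mathlib

namespace RHS

/-- Vertices of the base cycle. -/
def X (k : ℕ) (j : ℕ) : ℤ :=
  if j = 0 ∨ j = k then 0
  else if j % 2 = 0 then (j / 2 : ℕ) + (if k % 4 = 1 ∨ k % 4 = 2 then 1 else 0)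
  else (k : ℤ) - (j / 2 : ℕ) + (if k % 4 = 1 ∨ k % 4 = 2 then 1 else 0)
    - (if (k + 1) / 4 ≤ j / 2 then 1 else 0)

/-- Differences. -/
def C (k : ℕ) (j : ℕ) : ℤ := X k (j + 1) - X k j

lemma X_bound (k j : ℕ) (hk : 3 ≤ k) (hj : j ≤ k) : 0 ≤ X k j ∧ X k j ≤ k + 1 := by
  unfold X; split_ifs <;> omega

lemma X_inj (k i j : ℕ) (hk : 3 ≤ k) (hi : 1 ≤ i) (hik : i ≤ k) (hj : 1 ≤ j) (hjk : j ≤ k)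
    (h : X k i = X k j) : i = j := by
  unfold X at h; split_ifs at h <;> omega

/-- Magnitudes of differences. -/
def D (k : ℕ) (j : ℕ) : ℤ :=
  if j = 0 then (k : ℤ) + (if k % 4 = 1 ∨ k % 4 = 2 then 1 else 0)
  else if j = k - 1 then (k : ℤ) - 2 * ((k + 1) / 4 : ℕ)
  else if j < 2 * ((k + 1) / 4) then (k : ℤ) - j
  else (k : ℤ) - j - 1

/-- Parity shift. -/
def E (k : ℕ) : ℤ := if k % 4 = 1 ∨ k % 4 = 2 then 1 else 0

lemma X_zero (k j : ℕ) (h : j = 0 ∨ j = k) : X k j = 0 := by unfold X; rw [if_pos h]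

lemma X_even (k j : ℕ) (h : ¬ (j = 0 ∨ j = k)) (h2 : j % 2 = 0) :
    X k j = (j / 2 : ℕ) + E k := by unfold X E; rw [if_neg h, if_pos h2]

lemma X_odd1 (k j : ℕ) (h : ¬ (j = 0 ∨ j = k)) (h2 : ¬ j % 2 = 0) (h3 : (k + 1) / 4 ≤ j / 2) :
    X k j = (k : ℤ) - (j / 2 : ℕ) + E k - 1 := by
  unfold X E; rw [if_neg h, if_neg h2, if_pos h3]

lemma X_odd0 (k j : ℕ) (h : ¬ (j = 0 ∨ j = k)) (h2 : ¬ j % 2 = 0) (h3 : ¬ (k + 1) / 4 ≤ j / 2) :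
    X k j = (k : ℤ) - (j / 2 : ℕ) + E k := by
  unfold X E; rw [if_neg h, if_neg h2, if_neg h3, sub_zero]

lemma D0 (k j : ℕ) (h : j = 0) : D k j = k + E k := by unfold D E; rw [if_pos h]

lemma D1 (k j : ℕ) (h : ¬ j = 0) (h2 : j = k - 1) :
    D k j = (k : ℤ) - 2 * ((k + 1) / 4 : ℕ) := by unfold D; rw [if_neg h, if_pos h2]

lemma D2 (k j : ℕ) (h : ¬ j = 0) (h2 : ¬ j = k - 1) (h3 : j < 2 * ((k + 1) / 4)) :
    D k j = (k : ℤ) - j := by unfold D; rw [if_neg h, if_neg h2, if_pos h3]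

lemma D3 (k j : ℕ) (h : ¬ j = 0) (h2 : ¬ j = k - 1) (h3 : ¬ j < 2 * ((k + 1) / 4)) :
    D k j = (k : ℤ) - j - 1 := by unfold D; rw [if_neg h, if_neg h2, if_neg h3]

lemma C_eq (k j : ℕ) (hk : 3 ≤ k) (hj : j < k) : C k j = D k j ∨ C k j = - D k j := by
  unfold C
  by_cases h0 : j = 0
  · left
    rw [D0 k j h0, X_zero k j (Or.inl h0), X_odd0 k (j + 1) (by omega) (by omega) (by omega)]
    omega
  by_cases h1 : j = k - 1
  · right
    rw [D1 k j h0 h1, X_zero k (j + 1) (by omega)]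
    by_cases h2 : j % 2 = 0
    · rw [X_even k j (by omega) h2]
      unfold E; split_ifs <;> omega
    · rw [X_odd1 k j (by omega) h2 (by omega)]
      unfold E; split_ifs <;> omega
  by_cases h3 : j < 2 * ((k + 1) / 4)
  · rw [D2 k j h0 h1 h3]
    by_cases h2 : j % 2 = 0
    · left
      rw [X_even k j (by omega) h2, X_odd0 k (j + 1) (by omega) (by omega) (by omega)]
      omega
    · right
      rw [X_even k (j + 1) (by omega) (by omega), X_odd0 k j (by omega) (by omega) (by omega)]
      omega
  · rw [D3 k j h0 h1 h3]
    by_cases h2 : j % 2 = 0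
    · left
      rw [X_even k j (by omega) h2, X_odd1 k (j + 1) (by omega) (by omega) (by omega)]
      omega
    · right
      rw [X_even k (j + 1) (by omega) (by omega), X_odd1 k j (by omega) (by omega) (by omega)]
      omega

lemma D_bound (k j : ℕ) (hk : 3 ≤ k) (hj : j < k) :
    1 ≤ D k j ∧ (D k j ≤ k ∨ j = 0 ∧ D k j = k + 1) := by
  unfold D; split_ifs <;> omega

lemma D_bound' (k j : ℕ) (hk : 3 ≤ k) (hj : j < k) (h0 : j ≠ 0) :
    D k j ≤ k - 1 := by
  unfold D; split_ifs <;> omega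

lemma D_inj (k i j : ℕ) (hk : 3 ≤ k) (hi : i < k) (hj : j < k) (h : D k i = D k j) : i = j := by
  unfold D at h; split_ifs at h <;> omega

lemma aux (k : ℕ) (z : ℤ) (h : ((2 * k + 1 : ℕ) : ℤ) ∣ z) (h1 : z < 2 * k + 1)
    (h2 : - (2 * k + 1) < z) : z = 0 := by
  apply Int.eq_zero_of_abs_lt_dvd h
  rw [abs_lt]; push_cast; constructor <;> linarith

lemma C_ne (k j : ℕ) (hk : 3 ≤ k) (hj : j < k) : ¬ ((2 * k + 1 : ℕ) : ℤ) ∣ C k j := by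
  intro hd
  have h1 := D_bound k j hk hj
  have := aux k _ hd
  rcases C_eq k j hk hj with h | h <;> omega

lemma C_pm (k i j : ℕ) (hk : 3 ≤ k) (hi : i < k) (hj : j < k) (hij : i ≠ j) (z : ℤ)
    (hz : z = C k i + C k j ∨ z = C k i - C k j) :
    ¬ ((2 * k + 1 : ℕ) : ℤ) ∣ z := by
  intro h
  have a1 := D_bound k i hk hi
  have a2 := D_bound k j hk hj
  have a3 := D_bound' k i hk hi
  have a4 := D_bound' k j hk hj
  have a5 := mt (D_inj k i j hk hi hj) hij
  have := aux k z h
  rcases C_eq k i hk hi with h | h <;> rcases C_eq k j hk hj with h' | h' <;> omega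

lemma C_add_self (k i : ℕ) (hk : 3 ≤ k) (hi : i < k) :
    ¬ ((2 * k + 1 : ℕ) : ℤ) ∣ C k i + C k i := by
  intro h
  apply C_ne k i hk hi
  rw [← two_mul] at h
  refine IsCoprime.dvd_of_dvd_mul_left ?_ h
  exact ⟨1, -k, by push_cast; ring⟩

lemma sum_C (k n : ℕ) : ∑ j ∈ Finset.range n, C k j = X k n := by
  unfold C
  rw [Finset.sum_range_sub]
  simp [X]

/-- Multipliers. -/
def u (k : ℕ) (j : ℕ) : ℤ :=
  if k % 2 = 1 then (if j = k / 2 then - ((k : ℤ) - 1) else 1)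
  else (if j = 0 ∨ j = k - 1 then - ((k / 2 : ℕ) - 1 : ℤ) else 1)

lemma u_sum (k : ℕ) (hk : 3 ≤ k) : ∑ j ∈ Finset.range k, u k j = 0 := by
  rcases Nat.mod_two_eq_zero_or_one k with h | h
  · have : ∀ j, u k j = 1 + (if j = 0 then - ((k / 2 : ℕ) : ℤ) else 0)
        + (if j = k - 1 then - ((k / 2 : ℕ) : ℤ) else 0) := by
      intro j; unfold u; split_ifs <;> omega
    simp only [this, Finset.sum_add_distrib, Finset.sum_ite_eq', Finset.mem_range]
    simp only [Finset.sum_const, Finset.card_range, smul_eq_mul, nsmul_eq_mul]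
    split_ifs <;> omega
  · have : ∀ j, u k j = 1 + (if j = k / 2 then - (k : ℤ) else 0) := by
      intro j; unfold u; split_ifs <;> omega
    simp only [this, Finset.sum_add_distrib, Finset.sum_ite_eq', Finset.mem_range]
    simp only [Finset.sum_const, Finset.card_range, smul_eq_mul, nsmul_eq_mul]
    split_ifs <;> omega

lemma u_symm (k j : ℕ) (hj : j < k) : u k (k - 1 - j) = u k j := by
  unfold u; split_ifs <;> omega

lemma ut_sum (k : ℕ) : ∑ j ∈ Finset.range k, u k j * (2 * j - (k - 1)) = 0 := by
  have h := Finset.sum_range_reflect (fun j => u k j * (2 * (j : ℤ) - (k - 1))) k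
  have h2 : ∑ j ∈ Finset.range k, u k (k - 1 - j) * (2 * ((k - 1 - j : ℕ) : ℤ) - (k - 1))
      = - ∑ j ∈ Finset.range k, u k j * (2 * (j : ℤ) - (k - 1)) := by
    rw [← Finset.sum_neg_distrib]
    apply Finset.sum_congr rfl
    intro j hj
    have hj := Finset.mem_range.1 hj
    rw [u_symm k j hj]
    have : ((k - 1 - j : ℕ) : ℤ) = k - 1 - j := by omega
    rw [this]; ring
  rw [h2] at h
  linarith

lemma u_ne (p k j : ℕ) (hk : 3 ≤ k) (hkp : k ≤ p) (hj : j < k) : ((u k j : ℤ) : ZMod p) ≠ 0 := by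
  rw [Ne, ZMod.intCast_zmod_eq_zero_iff_dvd]
  intro h
  have : u k j ≠ 0 := by unfold u; split_ifs <;> omega
  apply this
  apply Int.eq_zero_of_abs_lt_dvd h
  rw [abs_lt]
  unfold u; split_ifs <;> omega

lemma t_ne (p k i j : ℕ) (hp : p.Prime) (hp3 : 3 ≤ p) (hkp : k ≤ p) (hi : i < k)
    (hj : j < k) (hij : i ≠ j) : ((2 * ((i : ℤ) - j) : ℤ) : ZMod p) ≠ 0 := by
  rw [Ne, ZMod.intCast_zmod_eq_zero_iff_dvd]
  intro h
  rcases (Nat.prime_iff_prime_int.1 hp).dvd_or_dvd h with h | h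
  · have := Int.le_of_dvd (by norm_num) h
    omega
  · have := Int.eq_zero_of_abs_lt_dvd h (by rw [abs_lt]; omega)
    omega

lemma sum_Iic {A : Type*} [AddCommMonoid A] (k : ℕ) (i : Fin k) (F : ℕ → A) :
    ∑ j ∈ Finset.Iic i, F j = ∑ j ∈ Finset.range (i + 1), F j := by
  have : Finset.range (i + 1) = (Finset.Iic i).map Fin.valEmbedding := by
    rw [Fin.map_valEmbedding_Iic]; ext; simp [Nat.lt_succ_iff]
  rw [this, Finset.sum_map]; rfl

lemma exists_g (p M : ℕ) (hp : 0 < p) (hM : 0 < M) : ∃ (g : ZMod p →+ ZMod (p * M)),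
    Function.Injective g ∧ ∀ z : ZMod (p * M),
      (z ∈ Set.range g ↔ z ∈ AddSubgroup.zmultiples ((M : ℕ) : ZMod (p * M))) ∧
      (ZMod.castHom (Dvd.intro_left p rfl : M ∣ p * M) (ZMod M) z = 0 ↔ z ∈ Set.range g) := by
  have h0 : (zmultiplesHom (ZMod (p * M)) ((M : ℕ) : ZMod (p * M))) p = 0 := by
    simp [← Nat.cast_mul]
  let g := ZMod.lift p ⟨zmultiplesHom (ZMod (p * M)) ((M : ℕ) : ZMod (p * M)), h0⟩
  have hg : ∀ n : ℤ, g n = ((n * M : ℤ) : ZMod (p * M)) := by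
    intro n; simp [g]
  refine ⟨g, ?_, ?_⟩
  · rw [injective_iff_map_eq_zero]
    intro a ha
    obtain ⟨n, rfl⟩ := ZMod.intCast_surjective a
    rw [hg, ZMod.intCast_zmod_eq_zero_iff_dvd] at ha
    rw [ZMod.intCast_zmod_eq_zero_iff_dvd]
    push_cast at ha
    exact Int.dvd_of_mul_dvd_mul_right (by omega) ha
  · intro z
    obtain ⟨n, rfl⟩ := ZMod.intCast_surjective z
    constructor
    · rw [AddSubgroup.mem_zmultiples_iff]
      constructor
      · rintro ⟨y, hy⟩
        obtain ⟨m, rfl⟩ := ZMod.intCast_surjective y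
        exact ⟨m, by rw [← hy, hg]; simp⟩
      · rintro ⟨m, hm⟩
        exact ⟨m, by rw [← hm, hg]; simp⟩
    · rw [map_intCast, ZMod.intCast_zmod_eq_zero_iff_dvd]
      constructor
      · rintro ⟨m, rfl⟩
        exact ⟨m, by rw [hg, mul_comm m]⟩
      · rintro ⟨y, hy⟩
        obtain ⟨m, rfl⟩ := ZMod.intCast_surjective y
        rw [hg, ZMod.intCast_eq_intCast_iff_dvd_sub] at hy
        have h1 : (M : ℤ) ∣ n - m * M := dvd_trans ⟨p, by push_cast; ring⟩ hy
        have := dvd_add h1 (Dvd.intro_left m rfl)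
        simpa using this

/-- Every residue is `0` or plus or minus a `C`. -/
lemma cover (k : ℕ) (hk : 3 ≤ k) (z : ZMod (2 * k + 1)) (hz : z ≠ 0) :
    ∃ j : Fin k, z = (C k j : ℤ) ∨ z = -(C k j : ℤ) := by
  let F : Option (Fin k ⊕ Fin k) → ZMod (2 * k + 1) := fun o => match o with
    | none => 0
    | some (Sum.inl j) => (C k j : ℤ)
    | some (Sum.inr j) => -(C k j : ℤ)
  have e : ∀ a : ℤ, (a : ZMod (2 * k + 1)) = 0 → ((2 * k + 1 : ℕ) : ℤ) ∣ a := fun a h =>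
    (ZMod.intCast_zmod_eq_zero_iff_dvd a _).1 h
  have n0 : ∀ j : Fin k, ((C k j : ℤ) : ZMod (2 * k + 1)) ≠ 0 := fun j h =>
    C_ne k j hk j.2 (e _ h)
  have n1 : ∀ i j : Fin k, ((C k i : ℤ) : ZMod (2 * k + 1)) + (C k j : ℤ) ≠ 0 := by
    intro i j h
    rw [← Int.cast_add] at h
    by_cases hij : i = j
    · subst hij; exact C_add_self k i hk i.2 (e _ h)
    · exact C_pm k i j hk i.2 j.2 (fun h => hij (Fin.ext h)) _ (Or.inl rfl) (e _ h)
  have n2 : ∀ i j : Fin k, ((C k i : ℤ) : ZMod (2 * k + 1)) = (C k j : ℤ) → i = j := by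
    intro i j h
    rw [← sub_eq_zero, ← Int.cast_sub] at h
    by_contra hij
    exact C_pm k i j hk i.2 j.2 (fun h => hij (Fin.ext h)) _ (Or.inr rfl) (e _ h)
  have hF : Function.Injective F := by
    rintro (_ | i | i) (_ | j | j) h
    · rfl
    · exact absurd h.symm (n0 j)
    · exact absurd (neg_eq_zero.1 (Eq.symm h)) (n0 j)
    · exact absurd h (n0 i)
    · rw [n2 i j h]
    · exact absurd (eq_neg_iff_add_eq_zero.1 h) (n1 i j)
    · exact absurd (neg_eq_zero.1 h) (n0 i)
    · exact absurd (neg_eq_iff_add_eq_zero.1 h) (n1 i j)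
    · rw [n2 i j (neg_injective h)]
  have hb : Function.Bijective F := (Fintype.bijective_iff_injective_and_card F).2
    ⟨hF, by simp [ZMod.card]; omega⟩
  obtain ⟨(_ | j | j), h⟩ := hb.2 z
  · exact absurd h.symm hz
  · exact ⟨j, Or.inl h.symm⟩
  · exact ⟨j, Or.inr h.symm⟩

end RHS


/-- Existence of a simple cyclic `(pk, k; p)_p` relative Heffter space: a resolved
partial linear space with `pk` points forming a half-set of
`ZMod (p(2k+1)) \ ⟨2k+1⟩`, with `p` parallel classes each partitioning the points
into `p` zero-sum blocks of size `k`, any two points on at most one common block,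
and every block admitting a simple ordering. -/
theorem stmt_11 (p k : ℕ) (hp : p.Prime) (hp3 : 3 ≤ p) (hk3 : 3 ≤ k) (hkp : k ≤ p) :
    ∃ (V : Finset (ZMod (p * (2 * k + 1))))
      (P : Fin p → Finset (Finset (ZMod (p * (2 * k + 1))))),
      V.card = p * k ∧
      ((V : Set (ZMod (p * (2 * k + 1)))) ∪ (fun x => -x) '' (V : Set (ZMod (p * (2 * k + 1))))
        = (AddSubgroup.zmultiples ((2 * k + 1 : ℕ) : ZMod (p * (2 * k + 1))) : Set (ZMod (p * (2 * k + 1))))ᶜ) ∧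
      (∀ c, (P c).card = p) ∧
      (∀ c, ∀ B ∈ P c, B.card = k ∧ B ⊆ V ∧ (∑ x ∈ B, x) = 0) ∧
      (∀ c, ∀ x ∈ V, ∃! B, B ∈ P c ∧ x ∈ B) ∧
      (∀ c₁ c₂, ∀ B₁ ∈ P c₁, ∀ B₂ ∈ P c₂, ∀ x y : ZMod (p * (2 * k + 1)), x ≠ y →
        x ∈ B₁ → y ∈ B₁ → x ∈ B₂ → y ∈ B₂ → c₁ = c₂ ∧ B₁ = B₂) ∧
      (∀ c, ∀ B ∈ P c, ∃ f : Fin k → ZMod (p * (2 * k + 1)),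
        Finset.image f Finset.univ = B ∧
        Function.Injective (fun i : Fin k => ∑ j ∈ Finset.Iic i, f j)) := by
  classical
  have : Fact p.Prime := ⟨hp⟩
  obtain ⟨g, hg, hgz⟩ := RHS.exists_g p (2 * k + 1) (by omega) (by omega)
  set π := ZMod.castHom (Dvd.intro_left p rfl : (2 * k + 1) ∣ p * (2 * k + 1)) (ZMod (2 * k + 1))
    with hπ
  have hπg : ∀ y, π (g y) = 0 := fun y => (hgz _).2.2 ⟨y, rfl⟩
  let v : Fin k → ZMod p → ZMod (p * (2 * k + 1)) := fun j y => ((RHS.C k j : ℤ) : _) + g y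
  have hπv : ∀ j y, π (v j y) = ((RHS.C k j : ℤ) : ZMod (2 * k + 1)) := by
    intro j y; simp only [v, map_add, hπg, map_intCast, add_zero]
  have hv : ∀ i j y z, v i y = v j z → i = j ∧ y = z := by
    intro i j y z h
    have hij : i = j := by
      by_contra hij
      have h1 := congrArg π h
      rw [hπv, hπv, ← sub_eq_zero, ← Int.cast_sub, ZMod.intCast_zmod_eq_zero_iff_dvd] at h1
      exact RHS.C_pm k i j hk3 i.2 j.2 (fun h => hij (Fin.ext h)) _ (Or.inr rfl) h1
    subst hij
    exact ⟨rfl, hg (add_left_cancel h)⟩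
  let r : ℕ → ZMod p := fun j => (RHS.u k j : ℤ)
  let s : ℕ → ZMod p := fun j => (RHS.u k j * (2 * j - (k - 1)) : ℤ)
  have hr : ∀ j : Fin k, r j ≠ 0 := fun j => RHS.u_ne p k j hk3 hkp j.2
  have hrs : ∀ i j : Fin k, i ≠ j → s i * r j - s j * r i ≠ 0 := by
    intro i j hij
    have : s i * r j - s j * r i = r i * r j * ((2 * ((i : ℤ) - (j : ℕ)) : ℤ) : ZMod p) := by
      simp only [s, r]; push_cast; ring
    rw [this]
    exact mul_ne_zero (mul_ne_zero (hr i) (hr j))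
      (RHS.t_ne p k i j hp hp3 hkp i.2 j.2 (fun h => hij (Fin.ext h)))
  have hrsum : ∑ j ∈ Finset.range k, r j = 0 := by
    simp only [r]; rw [← Int.cast_sum, RHS.u_sum k hk3]; simp
  have hssum : ∑ j ∈ Finset.range k, s j = 0 := by
    simp only [s]; rw [← Int.cast_sum, RHS.ut_sum k]; simp
  let w : ZMod p → ZMod p → Fin k → ZMod (p * (2 * k + 1)) :=
    fun a b j => v j (a * s j + b * r j)
  let B : ZMod p → ZMod p → Finset (ZMod (p * (2 * k + 1))) :=
    fun a b => Finset.univ.image (w a b)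
  have hw : ∀ a b, Function.Injective (w a b) := fun a b i j h => (hv _ _ _ _ h).1
  have hmem : ∀ a b j y, v j y ∈ B a b ↔ y = a * s j + b * r j := by
    intro a b j y
    simp only [B, w, Finset.mem_image, Finset.mem_univ, true_and]
    constructor
    · rintro ⟨i, hi⟩
      obtain ⟨rfl, h⟩ := hv _ _ _ _ hi
      exact h.symm
    · rintro rfl; exact ⟨j, rfl⟩
  have hmem' : ∀ a b x, x ∈ B a b → ∃ j y, x = v j y := by
    intro a b x hx
    simp only [B, w, Finset.mem_image, Finset.mem_univ, true_and] at hx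
    obtain ⟨j, hj⟩ := hx
    exact ⟨j, _, hj.symm⟩
  have hBinj : ∀ a b b', B a b = B a b' → b = b' := by
    intro a b b' h
    have h1 : v ⟨0, by omega⟩ (a * s 0 + b * r 0) ∈ B a b := (hmem _ _ _ _).2 rfl
    rw [h, hmem] at h1
    exact mul_right_cancel₀ (hr ⟨0, by omega⟩) (add_left_cancel h1)
  have hcast : ∀ c₁ c₂ : Fin p, ((c₁ : ℕ) : ZMod p) = ((c₂ : ℕ) : ZMod p) → c₁ = c₂ := by
    intro c₁ c₂ h
    rw [ZMod.natCast_eq_natCast_iff'] at h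
    rw [Nat.mod_eq_of_lt c₁.2, Nat.mod_eq_of_lt c₂.2] at h
    exact Fin.ext h
  let V : Finset (ZMod (p * (2 * k + 1))) :=
    (Finset.univ : Finset (Fin k × ZMod p)).image (fun q => v q.1 q.2)
  have hV : ∀ x, x ∈ V ↔ ∃ j y, x = v j y := by
    intro x; simp only [V, Finset.mem_image, Finset.mem_univ, true_and, Prod.exists, eq_comm]
  refine ⟨V, fun c => Finset.univ.image (B ((c : ℕ) : ZMod p)), ?_, ?_, ?_, ?_, ?_, ?_, ?_⟩
  · rw [Finset.card_image_of_injective]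
    · simp [ZMod.card, mul_comm]
    · rintro ⟨i, y⟩ ⟨j, z⟩ h
      obtain ⟨h1, h2⟩ := hv _ _ _ _ h
      exact Prod.ext h1 h2
  · ext z
    have hz : z ∈ (AddSubgroup.zmultiples ((2 * k + 1 : ℕ) : ZMod (p * (2 * k + 1))) :
        Set (ZMod (p * (2 * k + 1)))) ↔ π z = 0 := by
      rw [SetLike.mem_coe, ← (hgz z).1, (hgz z).2]
    rw [Set.mem_compl_iff, hz]
    have hC : ∀ j : Fin k, ((RHS.C k j : ℤ) : ZMod (2 * k + 1)) ≠ 0 := fun j h =>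
      RHS.C_ne k j hk3 j.2 ((ZMod.intCast_zmod_eq_zero_iff_dvd _ _).1 h)
    constructor
    · rintro (h | ⟨x, h, rfl⟩)
      · obtain ⟨j, y, rfl⟩ := (hV _).1 h
        rw [hπv]; exact hC j
      · obtain ⟨j, y, rfl⟩ := (hV _).1 h
        simp only [map_neg]
        rw [hπv, neg_eq_zero]; exact hC j
    · intro h
      have key : ∀ (x : ZMod (p * (2 * k + 1))) (j : Fin k),
          π x = ((RHS.C k j : ℤ) : ZMod (2 * k + 1)) → x ∈ V := by
        intro x j h
        have h2 : π (x - ((RHS.C k j : ℤ) : ZMod (p * (2 * k + 1)))) = 0 := by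
          rw [map_sub, h, map_intCast, sub_self]
        obtain ⟨y, hy⟩ := (hgz _).2.1 h2
        exact (hV _).2 ⟨j, y, by simp only [v]; rw [hy]; ring⟩
      obtain ⟨j, hj | hj⟩ := RHS.cover k hk3 (π z) h
      · exact Or.inl (key z j hj)
      · exact Or.inr ⟨-z, key (-z) j (by rw [map_neg, hj, neg_neg]), neg_neg z⟩
  · intro c
    rw [Finset.card_image_of_injective _ (fun b b' h => hBinj _ b b' h)]
    simp [ZMod.card]
  · intro c B' hB'
    obtain ⟨b, -, rfl⟩ := Finset.mem_image.1 hB'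
    refine ⟨?_, ?_, ?_⟩
    · simp only [B]
      rw [Finset.card_image_of_injective _ (hw _ _)]; simp
    · intro x hx; exact (hV x).2 (hmem' _ _ _ hx)
    · simp only [B]
      rw [Finset.sum_image (fun i _ j _ h => hw _ _ h)]
      simp only [w, v]
      rw [Finset.sum_add_distrib, ← map_sum, ← Int.cast_sum,
        Fin.sum_univ_eq_sum_range (fun j => RHS.C k j) k,
        Fin.sum_univ_eq_sum_range (fun j => ((c : ℕ) : ZMod p) * s j + b * r j) k,
        RHS.sum_C, Finset.sum_add_distrib, ← Finset.mul_sum, ← Finset.mul_sum, hrsum, hssum]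
      simp [RHS.X]
  · intro c x hx
    obtain ⟨j, y, rfl⟩ := (hV x).1 hx
    refine ⟨B ((c : ℕ) : ZMod p) ((y - ((c : ℕ) : ZMod p) * s j) / r j),
      ⟨Finset.mem_image_of_mem _ (Finset.mem_univ _), ?_⟩, ?_⟩
    · rw [hmem, div_mul_cancel₀ _ (hr j)]; ring
    · rintro B' ⟨hB', hx'⟩
      obtain ⟨b, -, rfl⟩ := Finset.mem_image.1 hB'
      rw [hmem] at hx'
      congr 1
      rw [eq_div_iff (hr j), hx']; ring
  · intro c₁ c₂ B₁ h₁ B₂ h₂ x y hxy hx1 hy1 hx2 hy2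
    obtain ⟨b₁, -, rfl⟩ := Finset.mem_image.1 h₁
    obtain ⟨b₂, -, rfl⟩ := Finset.mem_image.1 h₂
    obtain ⟨i, x, rfl⟩ := hmem' _ _ _ hx1
    obtain ⟨j, y, rfl⟩ := hmem' _ _ _ hy1
    rw [hmem] at hx1 hx2 hy1 hy2
    have hij : i ≠ j := by
      rintro rfl; exact hxy (by rw [hx1, hy1])
    have ha : ((c₁ : ℕ) : ZMod p) = ((c₂ : ℕ) : ZMod p) := by
      have : (((c₁ : ℕ) : ZMod p) - ((c₂ : ℕ) : ZMod p)) * (s i * r j - s j * r i) = 0 := by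
        linear_combination (hx2 - hx1) * r j - (hy2 - hy1) * r i
      exact sub_eq_zero.1 ((mul_eq_zero.1 this).resolve_right (hrs i j hij))
    have hc := hcast _ _ ha
    subst hc
    refine ⟨rfl, ?_⟩
    congr 1
    have := hx1.symm.trans hx2
    exact mul_right_cancel₀ (hr i) (add_left_cancel this)
  · intro c B' hB'
    obtain ⟨b, -, rfl⟩ := Finset.mem_image.1 hB'
    refine ⟨w ((c : ℕ) : ZMod p) b, rfl, ?_⟩
    have hps : ∀ i : Fin k, π (∑ j ∈ Finset.Iic i, w ((c : ℕ) : ZMod p) b j)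
        = ((RHS.X k (i + 1) : ℤ) : ZMod (2 * k + 1)) := by
      intro i
      rw [map_sum]
      simp only [w, hπv]
      rw [RHS.sum_Iic k i (fun j => ((RHS.C k j : ℤ) : ZMod (2 * k + 1))), ← Int.cast_sum,
        RHS.sum_C]
    intro i j h
    have h1 := congrArg π h
    simp only [hps] at h1
    rw [← sub_eq_zero, ← Int.cast_sub, ZMod.intCast_zmod_eq_zero_iff_dvd] at h1
    have b1 := RHS.X_bound k (i + 1) hk3 i.2
    have b2 := RHS.X_bound k (j + 1) hk3 j.2
    have h2 := RHS.aux k _ h1 (by omega) (by omega)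
    have := RHS.X_inj k (i + 1) (j + 1) hk3 (by omega) i.2 (by omega) j.2 (by omega)
    exact Fin.ext (by omega)
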